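/- Let the setting be type A_N or type B_N, let (i_t,k_t), 1 ≤ t ≤ T, be a snake, and let (p_1,…,p_T) ∈ P̄_{(i_t,k_t)}. Let (j,ℓ) ∈ W be a point at which some p_t can be lowered (resp. raised), and let (p′_1,…,p′_T) be the tuple obtained by replacing that p_t with p_t𝒜_{j,ℓ}⁻¹ (resp. p_t𝒜_{j,ℓ}). Then ∏_{t=1}^T m(p′_t) = A_{j,ℓ}⁻¹ · ∏_{t=1}^T m(p_t) (resp. ∏_{t=1}^T m(p′_t) = A_{j,ℓ} · ∏_{t=1}^T m(p_t)) in the free abelian group M. -/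

import Mathlib

namespace Paper

/-- The ambient setting: type `A N` (with `N ≥ 1`) or type `B N ε`
(with `N ≥ 2` and `0 < ε < 1/2`). -/
inductive Setting where
  | A (N : ℕ)
  | B (N : ℕ) (ε : ℝ)

namespace Setting

/-- The rank `N`. -/
def N : Setting → ℕ
  | A n => n
  | B n _ => n

/-- Validity of the parameters of the setting. -/
def valid : Setting → Prop
  | A n => 1 ≤ n
  | B n ε => 2 ≤ n ∧ 0 < ε ∧ ε < 1 / 2

end Setting

/-- The numbers `r_i` : in type A all equal `1`; in type B, `r_N = 1` and `r_i = 2` for `i < N`. -/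
def rr : Setting → ℕ → ℕ
  | .A _, _ => 1
  | .B n _, j => if j = n then 1 else 2

/-- The set `X` in type `A_N`. -/
def XA (n : ℕ) : Set (ℕ × ℤ) :=
  {ik | 1 ≤ ik.1 ∧ ik.1 ≤ n ∧ ((ik.1 : ℤ) - ik.2) % 2 = 1}

/-- The set `X` in type `B_N`. -/
def XB (n : ℕ) : Set (ℕ × ℤ) :=
  {ik | (ik.1 = n ∧ ik.2 % 2 = 1) ∨ (1 ≤ ik.1 ∧ ik.1 < n ∧ ik.2 % 2 = 0)}

/-- The set `X ⊆ I × ℤ`. -/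
def X : Setting → Set (ℕ × ℤ)
  | .A n => XA n
  | .B n _ => XB n

/-- The set `W = {(i,k) : (i, k - r_i) ∈ X}`. -/
def W (S : Setting) : Set (ℕ × ℤ) :=
  {ik | (ik.1, ik.2 - (rr S ik.1 : ℤ)) ∈ X S}

/-- The `r`-th point of a path (a finite list of points of the plane). -/
def pt (p : List (ℝ × ℝ)) (r : ℕ) : ℝ × ℝ := p.getD r (0, 0)

/-- The set of paths `𝒫_{i,k}` in type `A_N`. -/
def pathsA (n : ℕ) (i : ℕ) (k : ℤ) : Set (List (ℝ × ℝ)) :=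
  {p | p.length = n + 2 ∧
    (∀ r, r < n + 2 → (pt p r).1 = (r : ℝ)) ∧
    (pt p 0).2 = (i : ℝ) + (k : ℝ) ∧
    (pt p (n + 1)).2 = (n : ℝ) + 1 - (i : ℝ) + (k : ℝ) ∧
    (∀ r, r ≤ n → (pt p (r + 1)).2 - (pt p r).2 = 1 ∨ (pt p (r + 1)).2 - (pt p r).2 = -1)}

/-- The set of paths `𝒫_{N,ℓ}` in type `B_N`. -/
def pathsBspin (n : ℕ) (ε : ℝ) (l : ℤ) : Set (List (ℝ × ℝ)) :=
  {p | p.length = n + 1 ∧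
    (if l % 4 = 3 then ∀ r, r < n → (pt p r).1 = 2 * (r : ℝ)
     else ∀ r, r < n → (pt p r).1 = 4 * (n : ℝ) - 2 - 2 * (r : ℝ)) ∧
    (pt p n).1 = 2 * (n : ℝ) - 1 ∧
    (pt p 0).2 = (l : ℝ) + 2 * (n : ℝ) - 1 ∧
    (∀ r, r + 2 ≤ n → (pt p (r + 1)).2 - (pt p r).2 = 2 ∨ (pt p (r + 1)).2 - (pt p r).2 = -2) ∧
    ((pt p n).2 - (pt p (n - 1)).2 = 1 + ε ∨ (pt p n).2 - (pt p (n - 1)).2 = -(1 + ε))}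

/-- The set of paths `𝒫_{i,k}` in type `B_N`. -/
def pathsB (n : ℕ) (ε : ℝ) (i : ℕ) (k : ℤ) : Set (List (ℝ × ℝ)) :=
  if i = n then pathsBspin n ε k
  else {p | ∃ a b : List (ℝ × ℝ),
    a ∈ pathsBspin n ε (k - (2 * (n : ℤ) - 2 * (i : ℤ) - 1)) ∧
    b ∈ pathsBspin n ε (k + (2 * (n : ℤ) - 2 * (i : ℤ) - 1)) ∧
    p = a ++ b.reverse ∧
    (pt a n).1 = (pt b n).1 ∧ 0 < (pt a n).2 - (pt b n).2}

/-- The set of paths `𝒫_{i,k}`. -/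
def P : Setting → ℕ → ℤ → Set (List (ℝ × ℝ))
  | .A n => pathsA n
  | .B n ε => pathsB n ε

/-- The map `ι : X → ℤ × ℤ` of type `B_N`. -/
def iotaB (n : ℕ) (ik : ℕ × ℤ) : ℤ × ℤ :=
  if ik.1 = n then (2 * (n : ℤ) - 1, ik.2)
  else if (2 * (n : ℤ) + ik.2 - 2 * (ik.1 : ℤ)) % 4 = 2 then (2 * (ik.1 : ℤ), ik.2)
  else (4 * (n : ℤ) - 2 - 2 * (ik.1 : ℤ), ik.2)

/-- The corners of a path: `Cp S p true` is the set `C_{p,+}` of upper corners, and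
`Cp S p false` is the set `C_{p,-}` of lower corners. -/
def Cp (S : Setting) (p : List (ℝ × ℝ)) (up : Bool) : Set (ℕ × ℤ) :=
  match S with
  | .A n =>
    {jl | 1 ≤ jl.1 ∧ jl.1 ≤ n ∧
      pt p jl.1 = ((jl.1 : ℝ), (jl.2 : ℝ)) ∧
      (pt p (jl.1 - 1)).2 = (jl.2 : ℝ) + (if up then 1 else -1) ∧
      (pt p (jl.1 + 1)).2 = (jl.2 : ℝ) + (if up then 1 else -1)}
  | .B n ε =>
    {jl | jl ∈ XB n ∧
      ((∃ r : ℕ, 1 ≤ r ∧ r + 1 < p.length ∧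
          pt p r = (((iotaB n jl).1 : ℝ), ((iotaB n jl).2 : ℝ)) ∧
          (iotaB n jl).1 ≠ 0 ∧ (iotaB n jl).1 ≠ 2 * (n : ℤ) - 1 ∧
          (iotaB n jl).1 ≠ 4 * (n : ℤ) - 2 ∧
          (if up then (pt p r).2 < (pt p (r - 1)).2 ∧ (pt p r).2 < (pt p (r + 1)).2
           else (pt p (r - 1)).2 < (pt p r).2 ∧ (pt p (r + 1)).2 < (pt p r).2))
       ∨ (jl.1 = n ∧
          (if up then (2 * (n : ℝ) - 1, (jl.2 : ℝ) - ε) ∈ p ∧ (2 * (n : ℝ) - 1, (jl.2 : ℝ) + ε) ∉ p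
           else (2 * (n : ℝ) - 1, (jl.2 : ℝ) + ε) ∈ p ∧ (2 * (n : ℝ) - 1, (jl.2 : ℝ) - ε) ∉ p)))}

/-- `p'` is obtained from `p` by replacing the point `q` by the point `q'`. -/
def Replace1 (p p' : List (ℝ × ℝ)) (q q' : ℝ × ℝ) : Prop :=
  ∃ r : ℕ, r < p.length ∧ pt p r = q ∧ p'.length = p.length ∧ pt p' r = q' ∧
    ∀ s, s < p.length → s ≠ r → pt p' s = pt p s

/-- `p'` is obtained from `p` by replacing the point `q1` by `q1'` and the point `q2` by `q2'`. -/
def Replace2 (p p' : List (ℝ × ℝ)) (q1 q1' q2 q2' : ℝ × ℝ) : Prop :=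
  ∃ r s : ℕ, r < p.length ∧ s < p.length ∧ r ≠ s ∧ pt p r = q1 ∧ pt p s = q2 ∧
    p'.length = p.length ∧ pt p' r = q1' ∧ pt p' s = q2' ∧
    ∀ u, u < p.length → u ≠ r → u ≠ s → pt p' u = pt p u

/-- The path `p` can be lowered at `(j, l)`: `(j, l - r_j) ∈ C_{p,+}` and
`(j, l + r_j) ∉ C_{p,+}`. -/
def CanLower (S : Setting) (p : List (ℝ × ℝ)) (j : ℕ) (l : ℤ) : Prop :=
  (j, l - (rr S j : ℤ)) ∈ Cp S p true ∧ (j, l + (rr S j : ℤ)) ∉ Cp S p true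

/-- `p'` is the result of the lowering move at `(j,l)` applied to the path `p ∈ 𝒫_{i,k}`;
written `p' = p 𝒜_{j,l}⁻¹`. -/
def LoweredTo (S : Setting) (i : ℕ) (k : ℤ) (j : ℕ) (l : ℤ)
    (p p' : List (ℝ × ℝ)) : Prop :=
  p ∈ P S i k ∧ p' ∈ P S i k ∧ CanLower S p j l ∧
  (match S with
   | .A _ => Replace1 p p' ((j : ℝ), (l : ℝ) - 1) ((j : ℝ), (l : ℝ) + 1)
   | .B n ε =>
     if j = n then
       Replace1 p p' (2 * (n : ℝ) - 1, (l : ℝ) - 1 - ε) (2 * (n : ℝ) - 1, (l : ℝ) + 1 + ε)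
     else if j = n - 1 then
       Replace2 p p'
         (((iotaB n (j, l - 2)).1 : ℝ), (l : ℝ) - 2) (((iotaB n (j, l - 2)).1 : ℝ), (l : ℝ) + 2)
         (2 * (n : ℝ) - 1, (l : ℝ) - 1 + ε) (2 * (n : ℝ) - 1, (l : ℝ) + 1 - ε)
     else
       Replace1 p p'
         (((iotaB n (j, l - 2)).1 : ℝ), (l : ℝ) - 2) (((iotaB n (j, l - 2)).1 : ℝ), (l : ℝ) + 2))

/-- The path `p` can be raised at `(j,l)`: it is of the form `p' 𝒜_{j,l}⁻¹`. -/
def CanRaise (S : Setting) (i : ℕ) (k : ℤ) (p : List (ℝ × ℝ)) (j : ℕ) (l : ℤ) : Prop :=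
  ∃ p', LoweredTo S i k j l p' p

/-- The monomial group `ℳ`, realised as exponent functions: the free abelian group on the
symbols `Y_{i,k}`, `(i,k) ∈ X`, is identified with finitely supported functions `(ℕ × ℤ) → ℤ`,
written additively. -/
def Y (x : ℕ × ℤ) : (ℕ × ℤ) → ℤ := fun z => if z = x then 1 else 0

noncomputable def ind (s : Prop) : ℤ := @ite ℤ s (Classical.propDecidable s) 1 0

/-- The monomial `m(p)` of a path: `∏ Y_{j,l}` over upper corners times `∏ Y_{j,l}⁻¹`
over lower corners. -/
noncomputable def mon (S : Setting) (p : List (ℝ × ℝ)) : (ℕ × ℤ) → ℤ :=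
  fun x => ind (x ∈ Cp S p true) - ind (x ∈ Cp S p false)

/-- The monomials `A_{j,l}`, with the conventions `Y_{0,·} = Y_{N+1,·} = 1`. -/
def Amon (S : Setting) (j : ℕ) (l : ℤ) : (ℕ × ℤ) → ℤ :=
  match S with
  | .A n =>
      Y (j, l + 1) + Y (j, l - 1) - (if j = 1 then 0 else Y (j - 1, l))
        - (if j = n then 0 else Y (j + 1, l))
  | .B n _ =>
      if j = n then Y (n, l + 1) + Y (n, l - 1) - Y (n - 1, l)
      else if j = n - 1 then
        Y (n - 1, l + 2) + Y (n - 1, l - 2) - (if j = 1 then 0 else Y (n - 2, l))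
          - Y (n, l + 1) - Y (n, l - 1)
      else
        Y (j, l + 2) + Y (j, l - 2) - (if j = 1 then 0 else Y (j - 1, l)) - Y (j + 1, l)

/-- A monomial is dominant iff all its exponents are nonnegative. -/
def Dominant (m : (ℕ × ℤ) → ℤ) : Prop := ∀ x, 0 ≤ m x

/-- A monomial is anti-dominant iff all its exponents are nonpositive. -/
def AntiDominant (m : (ℕ × ℤ) → ℤ) : Prop := ∀ x, m x ≤ 0

/-- `(i',k')` is in snake position with respect to `(i,k)`. -/
def SnakePos : Setting → ℕ × ℤ → ℕ × ℤ → Prop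
  | .A _, ik, ik' => |(ik'.1 : ℤ) - (ik.1 : ℤ)| + 2 ≤ ik'.2 - ik.2
  | .B n _, ik, ik' =>
      if ik.1 = n ∧ ik'.1 = n then
        2 ≤ ik'.2 - ik.2 ∧ (ik'.2 - ik.2) % 4 = 2
      else if ik.1 = n ∨ ik'.1 = n then
        2 * |(ik'.1 : ℤ) - (ik.1 : ℤ)| + 3 ≤ ik'.2 - ik.2 ∧
          (ik'.2 - ik.2) % 4 = (2 * |(ik'.1 : ℤ) - (ik.1 : ℤ)| - 1) % 4
      else
        2 * |(ik'.1 : ℤ) - (ik.1 : ℤ)| + 4 ≤ ik'.2 - ik.2 ∧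
          (ik'.2 - ik.2) % 4 = (2 * |(ik'.1 : ℤ) - (ik.1 : ℤ)|) % 4

/-- A snake: a sequence of points of `X`, each in snake position w.r.t. the previous one. -/
def IsSnake (S : Setting) {T : ℕ} (w : Fin T → ℕ × ℤ) : Prop :=
  (∀ t, w t ∈ X S) ∧
  ∀ (t : Fin T) (h : (t : ℕ) + 1 < T), SnakePos S (w t) (w ⟨(t : ℕ) + 1, h⟩)

/-- `p` is strictly above `p'`. -/
def StrictlyAbove (p p' : List (ℝ × ℝ)) : Prop :=
  ∀ a ∈ p, ∀ b ∈ p', a.1 = b.1 → a.2 < b.2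

/-- A tuple of paths is non-overlapping. -/
def NonOverlapping {T : ℕ} (ps : Fin T → List (ℝ × ℝ)) : Prop :=
  ∀ s t : Fin T, s < t → StrictlyAbove (ps s) (ps t)

/-- The set `𝒫̄` of non-overlapping tuples of paths attached to a snake. -/
def PBar (S : Setting) {T : ℕ} (w : Fin T → ℕ × ℤ) : Set (Fin T → List (ℝ × ℝ)) :=
  {ps | (∀ t, ps t ∈ P S (w t).1 (w t).2) ∧ NonOverlapping ps}

/-- The product `∏_t m(p_t)` of the monomials of a tuple of paths. -/
noncomputable def tmon (S : Setting) {T : ℕ} (ps : Fin T → List (ℝ × ℝ)) : (ℕ × ℤ) → ℤ :=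
  ∑ t, mon S (ps t)

/-- Lowering move at `jl` on a tuple of paths: one component is lowered, the others
are unchanged. -/
def TLoweredTo (S : Setting) {T : ℕ} (w : Fin T → ℕ × ℤ) (jl : ℕ × ℤ)
    (ps ps' : Fin T → List (ℝ × ℝ)) : Prop :=
  ∃ t, LoweredTo S (w t).1 (w t).2 jl.1 jl.2 (ps t) (ps' t) ∧ ∀ s, s ≠ t → ps' s = ps s

/-- Sequences of raising/lowering moves on a single path; the list records, for each move,
whether it was a lowering move (`true`) or a raising move (`false`), and its site. -/
inductive MoveSeq (S : Setting) (i : ℕ) (k : ℤ) :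
    List (ℝ × ℝ) → List (ℝ × ℝ) → List (Bool × (ℕ × ℤ)) → Prop where
  | nil (p : List (ℝ × ℝ)) : MoveSeq S i k p p []
  | lower {p q r : List (ℝ × ℝ)} {jl : ℕ × ℤ} {ms : List (Bool × (ℕ × ℤ))} :
      jl ∈ W S → LoweredTo S i k jl.1 jl.2 p q → MoveSeq S i k q r ms →
      MoveSeq S i k p r ((true, jl) :: ms)
  | raise {p q r : List (ℝ × ℝ)} {jl : ℕ × ℤ} {ms : List (Bool × (ℕ × ℤ))} :
      jl ∈ W S → LoweredTo S i k jl.1 jl.2 q p → MoveSeq S i k q r ms →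
      MoveSeq S i k p r ((false, jl) :: ms)

/-- Sequences of raising/lowering moves on tuples of paths, all of whose intermediate
tuples are non-overlapping. -/
inductive TMoveSeq (S : Setting) {T : ℕ} (w : Fin T → ℕ × ℤ) :
    (Fin T → List (ℝ × ℝ)) → (Fin T → List (ℝ × ℝ)) → List (Bool × (ℕ × ℤ)) → Prop where
  | nil (ps : Fin T → List (ℝ × ℝ)) : TMoveSeq S w ps ps []
  | lower {ps qs rs : Fin T → List (ℝ × ℝ)} {jl : ℕ × ℤ} {ms : List (Bool × (ℕ × ℤ))} :
      jl ∈ W S → TLoweredTo S w jl ps qs → NonOverlapping qs →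
      TMoveSeq S w qs rs ms → TMoveSeq S w ps rs ((true, jl) :: ms)
  | raise {ps qs rs : Fin T → List (ℝ × ℝ)} {jl : ℕ × ℤ} {ms : List (Bool × (ℕ × ℤ))} :
      jl ∈ W S → TLoweredTo S w jl qs ps → NonOverlapping qs →
      TMoveSeq S w qs rs ms → TMoveSeq S w ps rs ((false, jl) :: ms)

/-- Sequences of lowering moves on tuples of paths, all of whose intermediate tuples
are non-overlapping; the list records the sites, in order. -/
inductive TLowerSeq (S : Setting) {T : ℕ} (w : Fin T → ℕ × ℤ) :
    (Fin T → List (ℝ × ℝ)) → (Fin T → List (ℝ × ℝ)) → List (ℕ × ℤ) → Prop where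
  | nil (ps : Fin T → List (ℝ × ℝ)) : TLowerSeq S w ps ps []
  | cons {ps qs rs : Fin T → List (ℝ × ℝ)} {jl : ℕ × ℤ} {ms : List (ℕ × ℤ)} :
      jl ∈ W S → TLoweredTo S w jl ps qs → NonOverlapping qs →
      TLowerSeq S w qs rs ms → TLowerSeq S w ps rs (jl :: ms)

/-- Weak order on paths with the same x-coordinates: `p` is weakly above `p'`. -/
def WeaklyAbove (p p' : List (ℝ × ℝ)) : Prop :=
  p.length = p'.length ∧ ∀ r, r < p.length → (pt p r).2 ≤ (pt p' r).2

/-- `p` is weakly below `p'`. -/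
def WeaklyBelow (p p' : List (ℝ × ℝ)) : Prop :=
  p.length = p'.length ∧ ∀ r, r < p.length → (pt p' r).2 ≤ (pt p r).2

/-- The path `top(p, p')`. -/
def topPath (p p' : List (ℝ × ℝ)) : List (ℝ × ℝ) :=
  List.zipWith (fun a b => (a.1, min a.2 b.2)) p p'

/-- The distinguished point contained in the highest path `p⁺_{i,k}`. -/
def highPoint : Setting → ℕ → ℤ → ℝ × ℝ
  | .A _, i, k => ((i : ℝ), (k : ℝ))
  | .B n ε, i, k =>
      if i = n then (2 * (n : ℝ) - 1, (k : ℝ) - ε)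
      else (((iotaB n (i, k)).1 : ℝ), ((iotaB n (i, k)).2 : ℝ))

/-- The distinguished point contained in the lowest path `p⁻_{i,k}`. -/
def lowPoint : Setting → ℕ → ℤ → ℝ × ℝ
  | .A n, i, k => ((n : ℝ) + 1 - (i : ℝ), (k : ℝ) + (n : ℝ) + 1)
  | .B n ε, i, k =>
      if i = n then (2 * (n : ℝ) - 1, (k : ℝ) + 4 * (n : ℝ) - 2 + ε)
      else (((iotaB n (i, k + 4 * (n : ℤ) - 2)).1 : ℝ),
            ((iotaB n (i, k + 4 * (n : ℤ) - 2)).2 : ℝ))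

/-- The highest path `p⁺_{i,k}` : the path of `𝒫_{i,k}` with no lower corners. -/
noncomputable def highestPath (S : Setting) (i : ℕ) (k : ℤ) : List (ℝ × ℝ) :=
  Classical.epsilon fun p => p ∈ P S i k ∧ Cp S p false = ∅

/-- The lowest path `p⁻_{i,k}` : the path of `𝒫_{i,k}` with no upper corners. -/
noncomputable def lowestPath (S : Setting) (i : ℕ) (k : ℤ) : List (ℝ × ℝ) :=
  Classical.epsilon fun p => p ∈ P S i k ∧ Cp S p true = ∅

/-!
The monomial of a path is a product over its edges. If `y_r` is the height of the path in column
`r`, the symbol `Y_{r,y_r}` has exponent `[y_r < y_{r+1}] - [y_{r-1} < y_r]` in `m(p)`, so every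
ascending edge contributes `Y_{r,y_r} / Y_{r+1,y_{r+1}}` and every descending edge contributes
nothing. Lowering at `(j,ℓ)` turns a descending edge ending in column `j` and the ascending edge
that follows it into an ascending edge followed by a descending one, and comparing the
contributions of these two edges multiplies `m(p)` by `A_{j,ℓ}⁻¹`.

In type B a spin path has an additional factor `Y_{N,y+ε} / Y_{N,y-ε}` at its end of height `y` in
the middle column. The monomial of a path in `𝒫_{i,k}` with `i < N` is the product of those of its
two spin halves, and a move changes only one of the halves.
-/

section Indicator

theorem ind_eq_ite (s : Prop) [Decidable s] : ind s = if s then 1 else 0 := by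
  unfold ind
  congr

theorem ind_eq_zero {s : Prop} (h : ¬ s) : ind s = 0 := by
  classical rw [ind_eq_ite, if_neg h]

theorem ind_or_of_not_and {s t : Prop} (h : ¬ (s ∧ t)) : ind (s ∨ t) = ind s + ind t := by
  by_cases hs : s <;> by_cases ht : t <;> simp_all [ind_eq_ite]

theorem ind_and_not_sub_ind_and_not (s t : Prop) :
    ind (s ∧ ¬ t) - ind (t ∧ ¬ s) = ind s - ind t := by
  by_cases hs : s <;> by_cases ht : t <;> simp [ind_eq_ite, hs, ht]

end Indicator

/-! ### Corner monomials of height sequences -/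

section Corners

/-- Consecutive heights `u, v, w` form an upper (`up = true`) or a lower (`up = false`) corner
at the middle one. Heights increase downwards, so an upper corner is a local minimum. -/
def IsCorner (up : Bool) (u v w : ℝ) : Prop :=
  if up then v < u ∧ v < w else u < v ∧ w < v

theorem isCorner_comm {up : Bool} {u v w : ℝ} : IsCorner up u v w ↔ IsCorner up w v u := by
  cases up <;> simp [IsCorner, and_comm]

/-- The symbol `Y_{j,y}` at a real height `y`, made trivial unless `0 < j < m` (this is the
convention `Y_{0,·} = Y_{m,·} = 1`) and unless `y` is an integer. -/
noncomputable def columnY (m j : ℕ) (y : ℝ) : ℕ × ℤ → ℤ :=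
  fun x => ind ((0 < j ∧ j < m) ∧ x.1 = j ∧ y = x.2)

/-- The contribution `Y_{r,y_r} / Y_{r+1,y_{r+1}}` of an ascending edge `y_r < y_{r+1}` of a
height sequence `y`; a descending edge contributes nothing. -/
noncomputable def edgeMon (m : ℕ) (y : ℕ → ℝ) (r : ℕ) : ℕ × ℤ → ℤ :=
  ind (y r < y (r + 1)) • (columnY m r (y r) - columnY m (r + 1) (y (r + 1)))

/-- The monomial of the corners in columns `0 < j < m` of a height sequence `y`, organised as a
product over edges instead of corners; see `cornerMon_apply` for the corners. -/
noncomputable def cornerMon (m : ℕ) (y : ℕ → ℝ) : ℕ × ℤ → ℤ :=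
  ∑ r ∈ Finset.range m, edgeMon m y r

variable {m i j : ℕ} {y y' : ℕ → ℝ}

theorem columnY_eq_zero (h : ¬ (0 < j ∧ j < m)) (a : ℝ) : columnY m j a = 0 :=
  funext fun _ => ind_eq_zero fun hx => h hx.1

theorem columnY_intCast (h0 : 0 < j) (hm : j < m) (l : ℤ) : columnY m j l = Y (j, l) := by
  ext ⟨i, c⟩
  simp [columnY, Y, ind_eq_ite, h0, hm, eq_comm (a := l)]

theorem columnY_intCast_add_sub (h0 : 0 < j) (hm : j < m) (l d : ℤ) :
    columnY m j (l + d) + columnY m j (l - d) = Y (j, l + d) + Y (j, l - d) := by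
  rw [← columnY_intCast h0 hm, ← columnY_intCast h0 hm, Int.cast_add, Int.cast_sub]

theorem columnY_intCast_eq_ite (hm : j < m) (l : ℤ) :
    columnY m j l = if j = 0 then 0 else Y (j, l) := by
  split_ifs with hj
  · exact columnY_eq_zero (by omega) _
  · exact columnY_intCast (Nat.pos_of_ne_zero hj) hm l

theorem columnY_eq_zero_of_forall_ne {a : ℝ} (h : ∀ z : ℤ, a ≠ z) : columnY m j a = 0 :=
  funext fun _ => ind_eq_zero fun hx => h _ hx.2.2

theorem edgeMon_apply_of_ne {r : ℕ} (h : j ≠ r) (h' : j ≠ r + 1) (c : ℤ) :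
    edgeMon m y r (j, c) = 0 := by
  simp [edgeMon, columnY, h, h', ind_eq_ite]

theorem edgeMon_of_lt {r : ℕ} (h : y r < y (r + 1)) :
    edgeMon m y r = columnY m r (y r) - columnY m (r + 1) (y (r + 1)) := by
  simp [edgeMon, ind_eq_ite, h]

theorem edgeMon_of_gt {r : ℕ} (h : y (r + 1) < y r) : edgeMon m y r = 0 := by
  simp [edgeMon, ind_eq_ite, h.not_gt]

theorem cornerMon_apply (him : i + 1 < m) (h : y i ≠ y (i + 1)) (h' : y (i + 1) ≠ y (i + 2))
    (c : ℤ) :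
    cornerMon m y (i + 1, c) =
      ind (y (i + 1) = c ∧ IsCorner true (y i) (y (i + 1)) (y (i + 2))) -
        ind (y (i + 1) = c ∧ IsCorner false (y i) (y (i + 1)) (y (i + 2))) := by
  have hedges : cornerMon m y (i + 1, c) =
      edgeMon m y i (i + 1, c) + edgeMon m y (i + 1) (i + 1, c) := by
    rw [cornerMon, Finset.sum_apply]
    refine Finset.sum_eq_add_of_mem i (i + 1) (by simp; omega) (by simpa) (by omega) ?_
    intro r _ hr
    exact edgeMon_apply_of_ne (by omega) (by omega) c
  rw [hedges]
  rcases h.lt_or_gt with h | h <;> rcases h'.lt_or_gt with h' | h' <;>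
    simp [edgeMon_of_lt, edgeMon_of_gt, h, h', h.not_gt, h'.not_gt, IsCorner,
      columnY, ind_eq_ite, him]

theorem cornerMon_apply_eq_zero (h : ¬ (0 < j ∧ j < m)) (c : ℤ) : cornerMon m y (j, c) = 0 := by
  rw [cornerMon, Finset.sum_apply]
  refine Finset.sum_eq_zero fun r _ => ?_
  have hzero : ∀ i a, columnY m i a (j, c) = 0 := by
    intro i a
    refine ind_eq_zero ?_
    rintro ⟨hi, hji, -⟩
    obtain rfl : j = i := hji
    exact h hi
  simp [edgeMon, hzero]

theorem cornerMon_eq_of_lower (him : i + 1 < m)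
    (hl : y (i + 1) < y i) (hr : y (i + 1) < y (i + 2))
    (hl' : y' i < y' (i + 1)) (hr' : y' (i + 2) < y' (i + 1))
    (heq : ∀ r < m, r ≠ i + 1 → y' r = y r) (hlast : i + 2 ≠ m → y' m = y m) :
    cornerMon m y' = cornerMon m y -
      (columnY m (i + 1) (y' (i + 1)) + columnY m (i + 1) (y (i + 1))
        - columnY m i (y i) - columnY m (i + 2) (y (i + 2))) := by
  have hedges : cornerMon m y' - cornerMon m y =
      (edgeMon m y' i - edgeMon m y i) + (edgeMon m y' (i + 1) - edgeMon m y (i + 1)) := by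
    rw [cornerMon, cornerMon, ← Finset.sum_sub_distrib]
    refine Finset.sum_eq_add_of_mem i (i + 1) (by simp; omega) (by simpa) (by omega) ?_
    intro r hr ⟨hri, hri'⟩
    have hr := Finset.mem_range.mp hr
    have hend : y' (r + 1) = y (r + 1) := by
      rcases (Nat.succ_le_of_lt hr).lt_or_eq with hrm | rfl
      · exact heq _ hrm (by omega)
      · exact hlast (by omega)
    rw [edgeMon, edgeMon, heq r hr hri', hend, sub_self]
  rw [← sub_add_cancel (cornerMon m y') (cornerMon m y), hedges, edgeMon_of_lt hl',
    edgeMon_of_gt hr', edgeMon_of_gt hl, edgeMon_of_lt hr, heq i (by omega) (by omega)]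
  abel

theorem cornerMon_eq_of_lower_last (h : y (m + 1) < y m) (h' : y' m < y' (m + 1))
    (heq : ∀ r ≤ m, y' r = y r) :
    cornerMon (m + 1) y' = cornerMon (m + 1) y + columnY (m + 1) m (y m) := by
  have hinit : ∀ r ∈ Finset.range m, edgeMon (m + 1) y' r = edgeMon (m + 1) y r := by
    intro r hr
    have hr := Finset.mem_range.mp hr
    rw [edgeMon, edgeMon, heq r hr.le, heq (r + 1) hr]
  rw [cornerMon, cornerMon, Finset.sum_range_succ, Finset.sum_range_succ,
    Finset.sum_congr rfl hinit, edgeMon_of_lt h', edgeMon_of_gt h,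
    columnY_eq_zero (j := m + 1) (by omega), heq m le_rfl]
  abel

end Corners

section Heights

/-- The `y`-coordinate of the `r`-th point of a path. -/
def height (p : List (ℝ × ℝ)) (r : ℕ) : ℝ := (pt p r).2

theorem Replace1.exists_height {p p' : List (ℝ × ℝ)} {x y x' y' : ℝ}
    (h : Replace1 p p' (x, y) (x', y')) :
    ∃ r < p.length, (pt p r).1 = x ∧ height p r = y ∧ height p' r = y' ∧
      ∀ s < p.length, s ≠ r → height p' s = height p s := by
  obtain ⟨r, hr, hpt, -, hpt', heq⟩ := h
  exact ⟨r, hr, by rw [hpt], by rw [height, hpt], by rw [height, hpt'],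
    fun s hs hsr => by rw [height, height, heq s hs hsr]⟩

theorem eq_of_abs_sub_sub_eq {x l d : ℝ} (h : |x - (l - d)| = d) (h' : |x - (l + d)| = d) :
    x = l := by
  have hd : 0 ≤ d := h ▸ abs_nonneg _
  rcases (abs_eq hd).mp h with h | h <;> rcases (abs_eq hd).mp h' with h' | h' <;> linarith

end Heights

/-! ### Type A -/

section TypeA

variable {n i j : ℕ} {k l c : ℤ} {p p' : List (ℝ × ℝ)}

theorem abs_height_succ_sub_of_mem_pathsA (hp : p ∈ pathsA n i k) {r : ℕ} (hr : r ≤ n) :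
    |height p (r + 1) - height p r| = 1 :=
  (abs_eq zero_le_one).mpr (hp.2.2.2.2 r hr)

theorem mem_Cp_A (hp : p ∈ pathsA n i k) (hj : j + 1 ≤ n) {up : Bool} :
    (j + 1, c) ∈ Cp (.A n) p up ↔ height p (j + 1) = c ∧
      IsCorner up (height p j) (height p (j + 1)) (height p (j + 2)) := by
  have hx : (pt p (j + 1)).1 = ((j + 1 : ℕ) : ℝ) := hp.2.1 (j + 1) (by omega)
  have hmem : (j + 1, c) ∈ Cp (.A n) p up ↔ height p (j + 1) = c ∧
      height p j = c + (if up then 1 else -1) ∧ height p (j + 2) = c + (if up then 1 else -1) := by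
    simp [Cp, Prod.ext_iff, hx, height, hj]
  rw [hmem, and_congr_right_iff]
  intro hc
  have hprev := (abs_eq zero_le_one).mp (abs_height_succ_sub_of_mem_pathsA hp (r := j) (by omega))
  have hnext := (abs_eq zero_le_one).mp (abs_height_succ_sub_of_mem_pathsA hp hj)
  cases up <;> simp only [IsCorner, if_true, if_false, Bool.false_eq_true] <;> grind

theorem mon_A (hp : p ∈ pathsA n i k) : mon (.A n) p = cornerMon (n + 1) (height p) := by
  ext ⟨j, c⟩
  by_cases hj : 0 < j ∧ j < n + 1
  · obtain ⟨j, rfl⟩ := Nat.exists_eq_add_of_le' hj.1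
    have hne : ∀ r ≤ n, height p r ≠ height p (r + 1) := by
      intro r hr h
      simpa [h] using abs_height_succ_sub_of_mem_pathsA hp hr
    rw [cornerMon_apply (by omega) (hne j (by omega)) (hne (j + 1) (by omega)), mon,
      mem_Cp_A hp (by omega), mem_Cp_A hp (by omega)]
  · rw [cornerMon_apply_eq_zero hj, mon, ind_eq_zero fun h => hj ⟨h.1, Nat.lt_succ_of_le h.2.1⟩,
      ind_eq_zero fun h => hj ⟨h.1, Nat.lt_succ_of_le h.2.1⟩, sub_zero]

theorem Amon_A (hj : j + 1 ≤ n) (l : ℤ) :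
    Amon (.A n) (j + 1) l = columnY (n + 1) (j + 1) (l + 1) + columnY (n + 1) (j + 1) (l - 1) -
      columnY (n + 1) j l - columnY (n + 1) (j + 2) l := by
  have hsum := columnY_intCast_add_sub (m := n + 1) (j := j + 1) (by omega) (by omega) l 1
  have hnext : columnY (n + 1) (j + 2) l = if j + 1 = n then 0 else Y (j + 2, l) := by
    split_ifs with h
    · exact columnY_eq_zero (by omega) _
    · exact columnY_intCast (by omega) (by omega) l
  push_cast at hsum
  rw [hsum, hnext, columnY_intCast_eq_ite (by omega)]
  simp [Amon]

theorem mon_A_of_loweredTo (h : LoweredTo (.A n) i k j l p p') :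
    mon (.A n) p' = mon (.A n) p - Amon (.A n) j l := by
  obtain ⟨hp, hp', ⟨hcorner, -⟩, hmove⟩ := h
  have hj : 1 ≤ j ∧ j ≤ n := ⟨hcorner.1, hcorner.2.1⟩
  obtain ⟨j, rfl⟩ := Nat.exists_eq_add_of_le' hj.1
  obtain ⟨r, hr, hrj, hy, hy', heq⟩ := Replace1.exists_height hmove
  rw [hp.1] at hr heq
  obtain rfl : r = j + 1 := by exact_mod_cast (hp.2.1 r hr).symm.trans hrj
  have hprev' := heq j (by omega) (by omega)
  have hnext' := heq (j + 2) (by omega) (by omega)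
  have hprev : height p j = l := by
    refine eq_of_abs_sub_sub_eq (d := 1) ?_ ?_
    · rw [← hy, abs_sub_comm, abs_height_succ_sub_of_mem_pathsA hp (by omega)]
    · rw [← hy', ← hprev', abs_sub_comm, abs_height_succ_sub_of_mem_pathsA hp' (by omega)]
  have hnext : height p (j + 2) = l := by
    refine eq_of_abs_sub_sub_eq (d := 1) ?_ ?_
    · rw [← hy, abs_height_succ_sub_of_mem_pathsA hp hj.2]
    · rw [← hy', ← hnext', abs_height_succ_sub_of_mem_pathsA hp' hj.2]
  rw [mon_A hp, mon_A hp', Amon_A hj.2,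
    cornerMon_eq_of_lower (by omega) (by linarith) (by linarith) (by linarith) (by linarith)
      (fun r hr => heq r (by omega)) (fun _ => heq _ (by omega) (by omega)), hy, hy', hprev, hnext]

end TypeA

/-! ### Type B -/

section SpinPaths

/-- The horizontal coordinate of the `r`-th point of the spin paths in `𝒫_{N,ℓ}`. -/
def abscissa (n : ℕ) (l : ℤ) (r : ℕ) : ℤ :=
  if r = n then 2 * n - 1 else if l % 4 = 3 then 2 * r else 4 * n - 2 - 2 * r

variable {n r j : ℕ} {ε : ℝ} {l c : ℤ} {a p : List (ℝ × ℝ)} {up : Bool}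

theorem abscissa_eq_last_iff : abscissa n l r = 2 * n - 1 ↔ r = n := by
  unfold abscissa
  split_ifs <;> omega

theorem iotaB_fst_ne_last (hj : j < n) : (iotaB n (j, c)).1 ≠ 2 * n - 1 := by
  simp only [iotaB, hj.ne, if_false]
  split_ifs <;> simp only <;> omega

theorem eq_of_abscissa_eq_iotaB_fst (hj : j < n) (hr : r ≤ n)
    (h : abscissa n l r = (iotaB n (j, c)).1) : r = j := by
  simp only [iotaB, hj.ne, if_false] at h
  unfold abscissa at h
  split_ifs at h <;> simp only at h <;> omega

theorem iotaB_fst_eq_abscissa (hj : j < n) (hc : c ≡ l + 2 * n - 1 + 2 * j [ZMOD 4]) :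
    (iotaB n (j, c)).1 = abscissa n l j := by
  simp only [iotaB, abscissa, hj.ne, if_false, Int.ModEq] at hc ⊢
  split_ifs <;> simp only <;> omega

theorem abscissa_ne_abscissa {l' : ℤ} (hj : j < n) (hl : l % 2 = 1) (hll' : l' % 4 = (l + 2) % 4) :
    abscissa n l j ≠ abscissa n l' j := by
  unfold abscissa
  split_ifs <;> omega

theorem fst_of_mem_pathsBspin (ha : a ∈ pathsBspin n ε l) (hr : r ≤ n) :
    (pt a r).1 = abscissa n l r := by
  obtain ⟨-, hinit, hlast, -⟩ := ha
  unfold abscissa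
  rcases hr.lt_or_eq with hr | rfl
  · rw [if_neg hr.ne]
    split_ifs at hinit ⊢ <;> simpa using hinit r hr
  · simpa using hlast

theorem abs_height_succ_sub_of_mem_pathsBspin (ha : a ∈ pathsBspin n ε l) (hr : r + 2 ≤ n) :
    |height a (r + 1) - height a r| = 2 :=
  (abs_eq zero_le_two).mpr (ha.2.2.2.2.1 r hr)

theorem abs_height_last_sub_of_mem_pathsBspin (hε : 0 < ε) (ha : a ∈ pathsBspin (n + 1) ε l) :
    |height a (n + 1) - height a n| = 1 + ε :=
  (abs_eq (by positivity)).mpr ha.2.2.2.2.2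

theorem height_ne_height_succ_of_mem_pathsBspin (hε : 0 < ε) (ha : a ∈ pathsBspin n ε l)
    (hr : r < n) : height a r ≠ height a (r + 1) := by
  obtain ⟨m, rfl⟩ : ∃ m, n = m + 1 := ⟨n - 1, by omega⟩
  intro h
  rcases (Nat.le_of_lt_succ hr).lt_or_eq with hr | rfl
  · simpa [h] using abs_height_succ_sub_of_mem_pathsBspin ha (by omega : r + 2 ≤ m + 1)
  · have := abs_height_last_sub_of_mem_pathsBspin hε ha
    rw [h, sub_self, abs_zero] at this
    linarith

theorem exists_height_eq_intCast (ha : a ∈ pathsBspin n ε l) (hr : r < n) :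
    ∃ z : ℤ, height a r = z ∧ z ≡ l + 2 * n - 1 + 2 * r [ZMOD 4] := by
  induction r with
  | zero => exact ⟨l + 2 * n - 1, by simpa [height] using ha.2.2.2.1, by simp⟩
  | succ r ih =>
    obtain ⟨z, hz, hmod⟩ := ih (by omega)
    unfold Int.ModEq at hmod ⊢
    rcases (abs_eq zero_le_two).mp (abs_height_succ_sub_of_mem_pathsBspin ha hr) with h | h
    · exact ⟨z + 2, by push_cast; linarith, by push_cast; omega⟩
    · exact ⟨z - 2, by push_cast; linarith, by push_cast; omega⟩

theorem exists_height_last_eq (hn : 0 < n) (hε : 0 < ε) (hl : l % 2 = 1)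
    (ha : a ∈ pathsBspin n ε l) :
    ∃ z : ℤ, z % 2 = 1 ∧ (height a n = z - ε ∨ height a n = z + ε) := by
  obtain ⟨m, rfl⟩ : ∃ m, n = m + 1 := ⟨n - 1, by omega⟩
  obtain ⟨z, hz, hmod⟩ := exists_height_eq_intCast ha m.lt_succ_self
  unfold Int.ModEq at hmod
  rcases (abs_eq (by positivity)).mp (abs_height_last_sub_of_mem_pathsBspin hε ha) with h | h
  · exact ⟨z + 1, by omega, .inr (by push_cast; linarith)⟩
  · exact ⟨z - 1, by omega, .inl (by push_cast; linarith)⟩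

theorem mem_last_column_iff (ha : a ∈ pathsBspin n ε l) (y : ℝ) :
    (2 * (n : ℝ) - 1, y) ∈ a ↔ height a n = y := by
  constructor
  · intro h
    obtain ⟨r, hr, hpt⟩ := List.mem_iff_getElem.mp h
    rw [← List.getD_eq_getElem a (0, 0) hr] at hpt
    have hrn : r ≤ n := by have := ha.1; omega
    have hx := fst_of_mem_pathsBspin ha hrn
    simp only [pt, hpt] at hx
    obtain rfl := (abscissa_eq_last_iff (l := l)).mp (by exact_mod_cast hx.symm)
    rw [height, pt, hpt]
  · rintro rfl
    have hn : n < a.length := by have := ha.1; omega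
    have hpt : pt a n = (2 * (n : ℝ) - 1, height a n) := Prod.ext ha.2.2.1 rfl
    rw [← hpt, pt, List.getD_eq_getElem a (0, 0) hn]
    exact List.getElem_mem hn

end SpinPaths

section MonB

/-- The path `p` has an upper or lower corner (according to `up`) at its interior point `q`. -/
def TurnsAt (p : List (ℝ × ℝ)) (up : Bool) (q : ℝ × ℝ) : Prop :=
  ∃ r, r + 2 < p.length ∧ pt p (r + 1) = q ∧
    IsCorner up (height p r) (height p (r + 1)) (height p (r + 2))

/-- The factor of the monomial of a spin path contributed by its end point of height `y` in the
middle column, namely `Y_{N,y+ε} / Y_{N,y-ε}`, of which at most one symbol has an integer height. -/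
noncomputable def endMon (n : ℕ) (ε y : ℝ) : ℕ × ℤ → ℤ :=
  columnY (n + 1) n (y + ε) - columnY (n + 1) n (y - ε)

variable {n j : ℕ} {ε : ℝ} {l c : ℤ} {a b p : List (ℝ × ℝ)} {up : Bool} {q : ℝ × ℝ}

theorem pt_append_left {r : ℕ} (hr : r < a.length) : pt (a ++ b) r = pt a r :=
  List.getD_append _ _ _ _ hr

theorem pt_append_right (r : ℕ) : pt (a ++ b) (a.length + r) = pt b r := by
  rw [pt, List.getD_append_right _ _ _ _ (Nat.le_add_right _ _), Nat.add_sub_cancel_left, pt]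

theorem pt_reverse {r s : ℕ} (h : r + s + 1 = p.length) : pt p.reverse r = pt p s := by
  unfold pt
  rw [List.getD_reverse r (by omega), show p.length - 1 - r = s by omega]

theorem TurnsAt.reverse (h : TurnsAt p up q) : TurnsAt p.reverse up q := by
  obtain ⟨r, hr, hpt, hcorner⟩ := h
  obtain ⟨s, hs⟩ := Nat.exists_eq_add_of_lt hr
  refine ⟨s, by simp; omega, by rwa [pt_reverse (s := r + 1) (by omega)], ?_⟩
  rw [isCorner_comm, height, height, height, pt_reverse (s := r) (by omega),
    pt_reverse (s := r + 1) (by omega), pt_reverse (s := r + 2) (by omega)]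
  exact hcorner

theorem turnsAt_reverse_iff : TurnsAt p.reverse up q ↔ TurnsAt p up q :=
  ⟨fun h => by simpa using h.reverse, TurnsAt.reverse⟩

theorem TurnsAt.append_right (h : TurnsAt a up q) : TurnsAt (a ++ b) up q := by
  obtain ⟨r, hr, hpt, hcorner⟩ := h
  refine ⟨r, by simp; omega, by rwa [pt_append_left (by omega)], ?_⟩
  rwa [height, height, height, pt_append_left (by omega), pt_append_left (by omega),
    pt_append_left hr]

theorem TurnsAt.append_left (h : TurnsAt b up q) : TurnsAt (a ++ b) up q := by
  obtain ⟨r, hr, hpt, hcorner⟩ := h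
  refine ⟨a.length + r, by simp; omega, by rwa [add_assoc, pt_append_right], ?_⟩
  rwa [height, height, height, add_assoc, add_assoc, pt_append_right, pt_append_right,
    pt_append_right]

theorem turnsAt_append_iff (ha : pt a (a.length - 1) ≠ q) (hb : pt b 0 ≠ q) :
    TurnsAt (a ++ b) up q ↔ TurnsAt a up q ∨ TurnsAt b up q := by
  refine ⟨?_, fun h => h.elim TurnsAt.append_right TurnsAt.append_left⟩
  rintro ⟨r, hr, hpt, hcorner⟩
  rw [List.length_append] at hr
  rcases lt_or_ge (r + 2) a.length with h | h
  · rw [height, height, height, pt_append_left (by omega), pt_append_left (by omega),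
      pt_append_left h] at hcorner
    rw [pt_append_left (by omega)] at hpt
    exact .inl ⟨r, h, hpt, hcorner⟩
  rcases lt_trichotomy (r + 1) a.length with h' | h' | h'
  · rw [pt_append_left h', show r + 1 = a.length - 1 by omega] at hpt
    exact absurd hpt ha
  · rw [show r + 1 = a.length + 0 by omega, pt_append_right] at hpt
    exact absurd hpt hb
  · obtain ⟨s, rfl⟩ := Nat.exists_eq_add_of_le (Nat.lt_succ_iff.mp h')
    rw [height, height, height, add_assoc, add_assoc, pt_append_right, pt_append_right,
      pt_append_right] at hcorner
    rw [add_assoc, pt_append_right] at hpt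
    exact .inr ⟨s, by omega, hpt, hcorner⟩

theorem mem_Cp_B (hj0 : 0 < j) (hjn : j < n) :
    (j, c) ∈ Cp (.B n ε) p up ↔
      c % 2 = 0 ∧ TurnsAt p up (((iotaB n (j, c)).1 : ℝ), (c : ℝ)) := by
  have hfst : (iotaB n (j, c)).1 ≠ 0 ∧ (iotaB n (j, c)).1 ≠ 4 * n - 2 := by
    simp only [iotaB, hjn.ne, if_false]
    split_ifs <;> simp only <;> omega
  have hsnd : (iotaB n (j, c)).2 = c := by
    unfold iotaB
    split_ifs <;> rfl
  have hX : (j, c) ∈ XB n ↔ c % 2 = 0 := by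
    simp [XB, hjn, hjn.ne, Nat.one_le_iff_ne_zero, hj0.ne']
  have hshift : TurnsAt p up (((iotaB n (j, c)).1 : ℝ), (c : ℝ)) ↔ ∃ r : ℕ, 1 ≤ r ∧
      r + 1 < p.length ∧ pt p r = (((iotaB n (j, c)).1 : ℝ), (c : ℝ)) ∧
      IsCorner up (height p (r - 1)) (height p r) (height p (r + 1)) := by
    constructor
    · rintro ⟨r, hr, hpt, hcorner⟩
      exact ⟨r + 1, by omega, hr, hpt, hcorner⟩
    · rintro ⟨r, hr1, hr, hpt, hcorner⟩
      obtain ⟨r, rfl⟩ := Nat.exists_eq_add_of_le' hr1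
      exact ⟨r, hr, hpt, hcorner⟩
  rw [hshift, ← hX]
  simp only [Cp, Set.mem_ofPred_eq, hsnd, hfst.1, iotaB_fst_ne_last hjn, hfst.2, hjn.ne, ne_eq,
    not_false_eq_true, true_and, false_and, or_false]
  rfl

theorem mem_Cp_B_last :
    (n, c) ∈ Cp (.B n ε) p up ↔ c % 2 = 1 ∧
      (if up then (2 * (n : ℝ) - 1, (c : ℝ) - ε) ∈ p ∧ (2 * (n : ℝ) - 1, (c : ℝ) + ε) ∉ p
       else (2 * (n : ℝ) - 1, (c : ℝ) + ε) ∈ p ∧ (2 * (n : ℝ) - 1, (c : ℝ) - ε) ∉ p) := by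
  simp [Cp, XB, iotaB]

theorem mon_B_apply_last (hc : c % 2 = 1) :
    mon (.B n ε) p (n, c) = ind ((2 * (n : ℝ) - 1, (c : ℝ) - ε) ∈ p) -
      ind ((2 * (n : ℝ) - 1, (c : ℝ) + ε) ∈ p) := by
  rw [← ind_and_not_sub_ind_and_not, mon, mem_Cp_B_last, mem_Cp_B_last]
  simp [hc]

theorem mon_B_apply_eq_zero (h : (j, c) ∉ XB n) : mon (.B n ε) p (j, c) = 0 := by
  rw [mon, ind_eq_zero fun hx => h hx.1, ind_eq_zero fun hx => h hx.1, sub_zero]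

theorem endMon_apply_last (hn : 0 < n) (y : ℝ) :
    endMon n ε y (n, c) = ind (y = c - ε) - ind (y = c + ε) := by
  simp [endMon, columnY, hn, ← eq_sub_iff_add_eq, sub_eq_iff_eq_add]

theorem endMon_apply_of_ne (hj : j ≠ n) (y : ℝ) : endMon n ε y (j, c) = 0 := by
  simp [endMon, columnY, hj]

theorem intCast_add_ne_intCast {δ : ℝ} (h0 : 0 < δ) (h1 : δ < 1) (z c : ℤ) : (z : ℝ) + δ ≠ c := by
  intro h
  have hlt : z < c := by exact_mod_cast (by linarith : (z : ℝ) < c)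
  have hgt : c < z + 1 := by exact_mod_cast (by linarith : (c : ℝ) < z + 1)
  omega

theorem endMon_intCast_sub (hn : 0 < n) (hε : 0 < ε) (hε' : ε < 1 / 2) (z : ℤ) :
    endMon n ε (z - ε) = Y (n, z) := by
  have hne : ∀ c : ℤ, (z : ℝ) - ε - ε ≠ c := fun c h =>
    intCast_add_ne_intCast (by positivity) (by linarith : 2 * ε < 1) c z (by linarith)
  rw [endMon, columnY_eq_zero_of_forall_ne hne, sub_add_cancel, columnY_intCast hn n.lt_succ_self,
    sub_zero]

theorem endMon_intCast_add (hn : 0 < n) (hε : 0 < ε) (hε' : ε < 1 / 2) (z : ℤ) :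
    endMon n ε (z + ε) = -Y (n, z) := by
  have hne : ∀ c : ℤ, (z : ℝ) + ε + ε ≠ c := fun c h =>
    intCast_add_ne_intCast (by positivity) (by linarith : 2 * ε < 1) z c (by linarith)
  rw [endMon, columnY_eq_zero_of_forall_ne hne, add_sub_cancel_right,
    columnY_intCast hn n.lt_succ_self, zero_sub]

theorem emod_two_of_height_last (hn : 0 < n) (hε : 0 < ε) (hε' : ε < 1 / 2) (hl : l % 2 = 1)
    (ha : a ∈ pathsBspin n ε l) (h : height a n = c - ε ∨ height a n = c + ε) : c % 2 = 1 := by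
  obtain ⟨z, hz, hz'⟩ := exists_height_last_eq hn hε hl ha
  have hcz : |(c : ℝ) - z| < 1 := by
    rw [abs_lt]
    constructor <;> rcases h with h | h <;> rcases hz' with h' | h' <;> linarith
  have : c - z = 0 := Int.abs_lt_one_iff.mp (by exact_mod_cast hcz)
  omega

theorem turnsAt_iff_of_mem_pathsBspin (ha : a ∈ pathsBspin n ε l) (hj : j + 1 < n) :
    TurnsAt a up (((iotaB n (j + 1, c)).1 : ℝ), (c : ℝ)) ↔
      pt a (j + 1) = (((iotaB n (j + 1, c)).1 : ℝ), (c : ℝ)) ∧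
        IsCorner up (height a j) (height a (j + 1)) (height a (j + 2)) := by
  refine ⟨?_, fun h => ⟨j, by rw [ha.1]; omega, h⟩⟩
  rintro ⟨r, hr, hpt, hcorner⟩
  rw [ha.1] at hr
  have hx := fst_of_mem_pathsBspin ha (by omega : r + 1 ≤ n)
  simp only [hpt] at hx
  have hrj : r + 1 = j + 1 :=
    eq_of_abscissa_eq_iotaB_fst hj (by omega) (by exact_mod_cast hx.symm)
  obtain rfl : r = j := by omega
  exact ⟨hpt, hcorner⟩

theorem mem_Cp_spin (hl : l % 2 = 1) (ha : a ∈ pathsBspin n ε l) (hj : j + 1 < n) :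
    (j + 1, c) ∈ Cp (.B n ε) a up ↔ height a (j + 1) = c ∧
      IsCorner up (height a j) (height a (j + 1)) (height a (j + 2)) := by
  rw [mem_Cp_B j.succ_pos hj, turnsAt_iff_of_mem_pathsBspin ha hj]
  constructor
  · rintro ⟨-, hpt, hcorner⟩
    exact ⟨by rw [height, hpt], hcorner⟩
  · rintro ⟨hy, hcorner⟩
    obtain ⟨z, hz, hmod⟩ := exists_height_eq_intCast ha hj
    obtain rfl : z = c := by exact_mod_cast hz.symm.trans hy
    have hx := fst_of_mem_pathsBspin ha hj.le
    rw [← iotaB_fst_eq_abscissa hj hmod] at hx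
    unfold Int.ModEq at hmod
    exact ⟨by omega, Prod.ext hx hy, hcorner⟩

theorem mon_spin (hn : 0 < n) (hε : 0 < ε) (hε' : ε < 1 / 2) (hl : l % 2 = 1)
    (ha : a ∈ pathsBspin n ε l) :
    mon (.B n ε) a = cornerMon n (height a) + endMon n ε (height a n) := by
  ext ⟨j, c⟩
  rw [Pi.add_apply]
  rcases eq_or_ne j n with rfl | hjn
  · rw [cornerMon_apply_eq_zero (by omega), zero_add, endMon_apply_last hn]
    rcases Int.emod_two_eq_zero_or_one c with hc | hc
    · have hne : ¬ (height a j = c - ε ∨ height a j = c + ε) := by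
        intro h
        have := emod_two_of_height_last hn hε hε' hl ha h
        omega
      rw [not_or] at hne
      rw [mon_B_apply_eq_zero (by simp [XB, hc]), ind_eq_zero hne.1, ind_eq_zero hne.2, sub_zero]
    · rw [mon_B_apply_last hc, mem_last_column_iff ha, mem_last_column_iff ha]
  rw [endMon_apply_of_ne hjn, add_zero]
  by_cases hj : 0 < j ∧ j < n
  · obtain ⟨j, rfl⟩ := Nat.exists_eq_add_of_le' hj.1
    rw [cornerMon_apply hj.2 (height_ne_height_succ_of_mem_pathsBspin hε ha (by omega))
      (height_ne_height_succ_of_mem_pathsBspin hε ha hj.2), mon, mem_Cp_spin hl ha hj.2,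
      mem_Cp_spin hl ha hj.2]
  · rw [cornerMon_apply_eq_zero hj, mon_B_apply_eq_zero (by simp [XB]; omega)]

theorem turnsAt_append_reverse_iff (ha : a ∈ pathsBspin n ε l) {l' : ℤ}
    (hb : b ∈ pathsBspin n ε l') (hj : j < n) :
    TurnsAt (a ++ b.reverse) up (((iotaB n (j, c)).1 : ℝ), (c : ℝ)) ↔
      TurnsAt a up (((iotaB n (j, c)).1 : ℝ), (c : ℝ)) ∨
        TurnsAt b up (((iotaB n (j, c)).1 : ℝ), (c : ℝ)) := by
  have hlast : ∀ {l p}, p ∈ pathsBspin n ε l → pt p n ≠ (((iotaB n (j, c)).1 : ℝ), (c : ℝ)) := by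
    intro l p hp h
    have hx := hp.2.2.1
    simp only [h] at hx
    exact iotaB_fst_ne_last hj (by exact_mod_cast hx)
  rw [turnsAt_append_iff, turnsAt_reverse_iff]
  · simpa [ha.1] using hlast ha
  · rw [pt_reverse (s := n) (by rw [hb.1]; omega)]
    exact hlast hb

theorem mon_append_reverse (hl : l % 2 = 1) (ha : a ∈ pathsBspin n ε l) {l' : ℤ}
    (hb : b ∈ pathsBspin n ε l') (hll' : l' % 4 = (l + 2) % 4)
    (hne : height a n ≠ height b n) :
    mon (.B n ε) (a ++ b.reverse) = mon (.B n ε) a + mon (.B n ε) b := by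
  ext ⟨j, c⟩
  rw [Pi.add_apply]
  by_cases hX : (j, c) ∈ XB n
  · rcases hX with ⟨rfl, hc⟩ | ⟨hj0, hjn, hc⟩
    · have hind : ∀ y, ind ((2 * (j : ℝ) - 1, y) ∈ a ++ b.reverse) =
          ind ((2 * (j : ℝ) - 1, y) ∈ a) + ind ((2 * (j : ℝ) - 1, y) ∈ b) := by
        intro y
        rw [List.mem_append, List.mem_reverse]
        refine ind_or_of_not_and ?_
        rw [mem_last_column_iff ha, mem_last_column_iff hb]
        rintro ⟨rfl, h⟩
        exact hne h.symm
      rw [mon_B_apply_last hc, mon_B_apply_last hc, mon_B_apply_last hc, hind, hind]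
      ring
    · obtain ⟨j, rfl⟩ := Nat.exists_eq_add_of_le' hj0
      have hind : ∀ up, ind ((j + 1, c) ∈ Cp (.B n ε) (a ++ b.reverse) up) =
          ind ((j + 1, c) ∈ Cp (.B n ε) a up) + ind ((j + 1, c) ∈ Cp (.B n ε) b up) := by
        intro up
        rw [mem_Cp_B hj0 hjn, mem_Cp_B hj0 hjn, mem_Cp_B hj0 hjn,
          turnsAt_append_reverse_iff ha hb hjn, and_or_left]
        refine ind_or_of_not_and ?_
        rw [turnsAt_iff_of_mem_pathsBspin ha hjn, turnsAt_iff_of_mem_pathsBspin hb hjn]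
        rintro ⟨⟨-, hpta, -⟩, -, hptb, -⟩
        have hx := congrArg Prod.fst (hpta.trans hptb.symm)
        rw [fst_of_mem_pathsBspin ha hjn.le, fst_of_mem_pathsBspin hb hjn.le] at hx
        exact abscissa_ne_abscissa hjn hl hll' (by exact_mod_cast hx)
      simp only [mon, hind]
      ring
  · rw [mon_B_apply_eq_zero hX, mon_B_apply_eq_zero hX, mon_B_apply_eq_zero hX, add_zero]

end MonB

section Replace

variable {a a' b b' : List (ℝ × ℝ)} {q q' q₁ q₁' q₂ q₂' : ℝ × ℝ}

theorem ext_pt {p p' : List (ℝ × ℝ)} (hlen : p.length = p'.length)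
    (h : ∀ r < p.length, pt p r = pt p' r) : p = p' := by
  refine List.ext_getElem hlen fun r hr hr' => ?_
  rw [← List.getD_eq_getElem p (0, 0) hr, ← List.getD_eq_getElem p' (0, 0) hr']
  exact h r hr

theorem pt_append_reverse {r s : ℕ} (hs : s < b.length) (h : r + s + 1 = a.length + b.length) :
    pt (a ++ b.reverse) r = pt b s := by
  obtain ⟨u, rfl⟩ := Nat.exists_eq_add_of_le (show a.length ≤ r by omega)
  rw [pt_append_right, pt_reverse (s := s) (by omega)]

theorem Replace1.of_append_reverse (hlen : a'.length = a.length) (hlen' : b'.length = b.length)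
    (h : Replace1 (a ++ b.reverse) (a' ++ b'.reverse) q q') :
    (Replace1 a a' q q' ∧ b' = b) ∨ (a' = a ∧ Replace1 b b' q q') := by
  obtain ⟨r, hr, hpt, -, hpt', heq⟩ := h
  rw [List.length_append, List.length_reverse] at hr heq
  have hleft : ∀ s < a.length, s ≠ r → pt a' s = pt a s := by
    intro s hs hsr
    have := heq s (by omega) hsr
    rwa [pt_append_left (by omega), pt_append_left hs] at this
  have hright : ∀ s < b.length, r + s + 1 ≠ a.length + b.length → pt b' s = pt b s := by
    intro s hs hsr
    have := heq (a.length + b.length - 1 - s) (by omega) (by omega)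
    rwa [pt_append_reverse (s := s) (by omega) (by omega),
      pt_append_reverse (s := s) hs (by omega)] at this
  rcases lt_or_ge r a.length with hra | hra
  · rw [pt_append_left hra] at hpt
    rw [pt_append_left (by omega)] at hpt'
    exact .inl ⟨⟨r, hra, hpt, hlen, hpt', hleft⟩,
      ext_pt hlen' fun s _ => hright s (by omega) (by omega)⟩
  · obtain ⟨t, ht⟩ := Nat.exists_eq_add_of_lt hr
    rw [pt_append_reverse (s := t) (by omega) (by omega)] at hpt hpt'
    exact .inr ⟨ext_pt hlen fun s _ => hleft s (by omega) (by omega),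
      t, by omega, hpt, hlen', hpt', fun s hs hst => hright s hs (by omega)⟩

-- In the last two alternatives the two replaced points lie in different halves.
theorem Replace2.of_append_reverse (hlen : a'.length = a.length) (hlen' : b'.length = b.length)
    (h : Replace2 (a ++ b.reverse) (a' ++ b'.reverse) q₁ q₁' q₂ q₂') :
    (Replace2 a a' q₁ q₁' q₂ q₂' ∧ b' = b) ∨ (a' = a ∧ Replace2 b b' q₁ q₁' q₂ q₂') ∨
      Replace1 a a' q₁ q₁' ∨ Replace1 b b' q₁ q₁' := by
  obtain ⟨r, u, hr, hu, hru, hpt₁, hpt₂, -, hpt₁', hpt₂', heq⟩ := h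
  rw [List.length_append, List.length_reverse] at hr hu heq
  have hleft : ∀ s < a.length, s ≠ r → s ≠ u → pt a' s = pt a s := by
    intro s hs hsr hsu
    have := heq s (by omega) hsr hsu
    rwa [pt_append_left (by omega), pt_append_left hs] at this
  have hright : ∀ s < b.length, r + s + 1 ≠ a.length + b.length →
      u + s + 1 ≠ a.length + b.length → pt b' s = pt b s := by
    intro s hs hsr hsu
    have := heq (a.length + b.length - 1 - s) (by omega) (by omega) (by omega)
    rwa [pt_append_reverse (s := s) (by omega) (by omega),
      pt_append_reverse (s := s) hs (by omega)] at this
  rcases lt_or_ge r a.length with hra | hra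
  · rw [pt_append_left hra] at hpt₁
    rw [pt_append_left (by omega)] at hpt₁'
    rcases lt_or_ge u a.length with hua | hua
    · rw [pt_append_left hua] at hpt₂
      rw [pt_append_left (by omega)] at hpt₂'
      exact .inl ⟨⟨r, u, hra, hua, hru, hpt₁, hpt₂, hlen, hpt₁', hpt₂', hleft⟩,
        ext_pt hlen' fun s _ => hright s (by omega) (by omega) (by omega)⟩
    · exact .inr <| .inr <| .inl
        ⟨r, hra, hpt₁, hlen, hpt₁', fun s hs hsr => hleft s hs hsr (by omega)⟩
  · obtain ⟨t, ht⟩ := Nat.exists_eq_add_of_lt hr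
    rw [pt_append_reverse (s := t) (by omega) (by omega)] at hpt₁ hpt₁'
    rcases lt_or_ge u a.length with hua | hua
    · exact .inr <| .inr <| .inr ⟨t, by omega, hpt₁, hlen', hpt₁',
        fun s hs hst => hright s hs (by omega) (by omega)⟩
    · obtain ⟨v, hv⟩ := Nat.exists_eq_add_of_lt hu
      rw [pt_append_reverse (s := v) (by omega) (by omega)] at hpt₂ hpt₂'
      exact .inr <| .inl ⟨ext_pt hlen fun s _ => hleft s (by omega) (by omega) (by omega),
        t, v, by omega, by omega, by omega, hpt₁, hpt₂, hlen', hpt₁', hpt₂',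
        fun s hs hst hsv => hright s hs (by omega) (by omega)⟩

theorem Replace2.exists_height {x₁ y₁ x₁' y₁' x₂ y₂ x₂' y₂' : ℝ}
    (h : Replace2 a a' (x₁, y₁) (x₁', y₁') (x₂, y₂) (x₂', y₂')) :
    ∃ r < a.length, ∃ s < a.length, (pt a r).1 = x₁ ∧ (pt a s).1 = x₂ ∧
      height a r = y₁ ∧ height a' r = y₁' ∧ height a s = y₂ ∧ height a' s = y₂' ∧
      ∀ u < a.length, u ≠ r → u ≠ s → height a' u = height a u := by
  obtain ⟨r, s, hr, hs, -, hpt₁, hpt₂, -, hpt₁', hpt₂', heq⟩ := h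
  exact ⟨r, hr, s, hs, by rw [hpt₁], by rw [hpt₂], by rw [height, hpt₁], by rw [height, hpt₁'],
    by rw [height, hpt₂], by rw [height, hpt₂'],
    fun u hu hur hus => by rw [height, height, heq u hu hur hus]⟩

end Replace

section MovesB

/-- The replacement of points performed by a lowering move at `(j,ℓ)` on a path of type B. -/
def ReplaceB (n : ℕ) (ε : ℝ) (j : ℕ) (l : ℤ) (p p' : List (ℝ × ℝ)) : Prop :=
  if j = n then
    Replace1 p p' (2 * (n : ℝ) - 1, (l : ℝ) - 1 - ε) (2 * (n : ℝ) - 1, (l : ℝ) + 1 + ε)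
  else if j = n - 1 then
    Replace2 p p'
      (((iotaB n (j, l - 2)).1 : ℝ), (l : ℝ) - 2) (((iotaB n (j, l - 2)).1 : ℝ), (l : ℝ) + 2)
      (2 * (n : ℝ) - 1, (l : ℝ) - 1 + ε) (2 * (n : ℝ) - 1, (l : ℝ) + 1 - ε)
  else
    Replace1 p p'
      (((iotaB n (j, l - 2)).1 : ℝ), (l : ℝ) - 2) (((iotaB n (j, l - 2)).1 : ℝ), (l : ℝ) + 2)

variable {n i j : ℕ} {k l l' m : ℤ} {ε : ℝ} {a a' b b' p p' : List (ℝ × ℝ)}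

theorem eq_of_pt_fst_eq_iotaB {r : ℕ} {c : ℤ} (ha : a ∈ pathsBspin n ε l) (hj : j < n)
    (hr : r < a.length) (hx : (pt a r).1 = (iotaB n (j, c)).1) : r = j := by
  have hr : r ≤ n := Nat.lt_succ_iff.mp (hr.trans_eq ha.1)
  rw [fst_of_mem_pathsBspin ha hr] at hx
  exact eq_of_abscissa_eq_iotaB_fst hj hr (by exact_mod_cast hx)

theorem eq_of_pt_fst_eq_last {r : ℕ} (ha : a ∈ pathsBspin n ε l) (hr : r < a.length)
    (hx : (pt a r).1 = 2 * (n : ℝ) - 1) : r = n := by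
  rw [fst_of_mem_pathsBspin ha (Nat.lt_succ_iff.mp (hr.trans_eq ha.1))] at hx
  exact (abscissa_eq_last_iff (l := l)).mp (by exact_mod_cast hx)

theorem height_eq_of_lower {r s : ℕ} (ha : a ∈ pathsBspin n ε l) (ha' : a' ∈ pathsBspin n ε l)
    (hrs : r + 1 = s ∨ s + 1 = r) (hr : r < n) (hs : s < n) (hy : height a s = m - 2)
    (hy' : height a' s = m + 2) (heq : height a' r = height a r) : height a r = m := by
  have hstep : ∀ {p}, p ∈ pathsBspin n ε l → |height p r - height p s| = 2 := by
    intro p hp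
    rcases hrs with rfl | rfl
    · rw [abs_sub_comm, abs_height_succ_sub_of_mem_pathsBspin hp hs]
    · exact abs_height_succ_sub_of_mem_pathsBspin hp hr
  exact eq_of_abs_sub_sub_eq (by rw [← hy, hstep ha]) (by rw [← hy', ← heq, hstep ha'])

theorem not_replace1_penultimate (hε : 0 < ε) (hε' : ε < 1 / 2)
    (ha : a ∈ pathsBspin (n + 1) ε l) (ha' : a' ∈ pathsBspin (n + 1) ε l) {c : ℤ} {x' : ℝ} :
    ¬ Replace1 a a' (((iotaB (n + 1) (n, c)).1 : ℝ), (m : ℝ) - 2) (x', (m : ℝ) + 2) := by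
  intro h
  obtain ⟨r, hr, hx, hy, hy', heq⟩ := h.exists_height
  obtain rfl : r = n := eq_of_pt_fst_eq_iotaB ha n.lt_succ_self hr hx
  have hlast := abs_height_last_sub_of_mem_pathsBspin hε ha
  have hlast' := abs_height_last_sub_of_mem_pathsBspin hε ha'
  rw [hy', heq (r + 1) (by rw [ha.1]; omega) (by omega)] at hlast'
  rw [hy] at hlast
  -- Both positions of the point are at distance `1 + ε` from the fixed end, so they differ by at
  -- most `2 + 2ε < 4`.
  rcases (abs_eq (by positivity)).mp hlast with h | h <;>
    rcases (abs_eq (by positivity)).mp hlast' with h' | h' <;> linarith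

theorem ReplaceB.of_append_reverse (hε : 0 < ε) (hε' : ε < 1 / 2) (hj0 : 0 < j) (hjn : j ≤ n)
    (ha : a ∈ pathsBspin n ε l) (ha' : a' ∈ pathsBspin n ε l) (hb : b ∈ pathsBspin n ε l')
    (hb' : b' ∈ pathsBspin n ε l')
    (h : ReplaceB n ε j m (a ++ b.reverse) (a' ++ b'.reverse)) :
    (ReplaceB n ε j m a a' ∧ b' = b) ∨ (a' = a ∧ ReplaceB n ε j m b b') := by
  have hlen : a'.length = a.length := ha'.1.trans ha.1.symm
  have hlen' : b'.length = b.length := hb'.1.trans hb.1.symm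
  unfold ReplaceB at h ⊢
  split_ifs at h ⊢ with hj hj'
  · exact h.of_append_reverse hlen hlen'
  · obtain ⟨n, rfl⟩ := Nat.exists_eq_add_of_le' (hj0.trans_le hjn)
    obtain rfl : j = n := hj'
    rcases h.of_append_reverse hlen hlen' with h | h | h | h
    · exact .inl h
    · exact .inr h
    · exact absurd h (not_replace1_penultimate hε hε' ha ha')
    · exact absurd h (not_replace1_penultimate hε hε' hb hb')
  · exact h.of_append_reverse hlen hlen'

theorem Amon_B_last (hj : 0 < j) :
    Amon (.B (j + 1) ε) (j + 1) m = Y (j + 1, m + 1) + Y (j + 1, m - 1) - columnY (j + 1) j m := by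
  rw [columnY_intCast hj j.lt_succ_self]
  simp [Amon]

theorem Amon_B_penultimate :
    Amon (.B (j + 2) ε) (j + 1) m =
      columnY (j + 2) (j + 1) (m + 2) + columnY (j + 2) (j + 1) (m - 2) - columnY (j + 2) j m -
        Y (j + 2, m + 1) - Y (j + 2, m - 1) := by
  have hsum := columnY_intCast_add_sub (m := j + 2) (j := j + 1) (by omega) (by omega) m 2
  push_cast at hsum
  rw [hsum, columnY_intCast_eq_ite (by omega)]
  simp [Amon]

theorem Amon_B_of_lt (hj : j + 2 < n) :
    Amon (.B n ε) (j + 1) m = columnY n (j + 1) (m + 2) + columnY n (j + 1) (m - 2) -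
      columnY n j m - columnY n (j + 2) m := by
  have hsum := columnY_intCast_add_sub (m := n) (j := j + 1) (by omega) (by omega) m 2
  push_cast at hsum
  rw [hsum, columnY_intCast_eq_ite (by omega), columnY_intCast (j := j + 2) (by omega) hj]
  simp [Amon, show j + 1 ≠ n by omega, show j + 1 ≠ n - 1 by omega]

theorem mon_spin_of_replaceB_last (hε : 0 < ε) (hε' : ε < 1 / 2) (hj : 0 < j) (hl : l % 2 = 1)
    (ha : a ∈ pathsBspin (j + 1) ε l) (ha' : a' ∈ pathsBspin (j + 1) ε l)
    (h : ReplaceB (j + 1) ε (j + 1) m a a') :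
    mon (.B (j + 1) ε) a' = mon (.B (j + 1) ε) a - Amon (.B (j + 1) ε) (j + 1) m := by
  rw [ReplaceB, if_pos rfl] at h
  obtain ⟨r, hr, hx, hy, hy', heq⟩ := h.exists_height
  obtain rfl : r = j + 1 := eq_of_pt_fst_eq_last ha hr hx
  rw [ha.1] at heq
  have hprev' : height a' j = height a j := heq j (by omega) (by omega)
  have hprev : height a j = m := by
    refine eq_of_abs_sub_sub_eq (d := 1 + ε) ?_ ?_
    · rw [← sub_sub, ← hy, abs_sub_comm, abs_height_last_sub_of_mem_pathsBspin hε ha]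
    · rw [← add_assoc, ← hy', ← hprev', abs_sub_comm,
        abs_height_last_sub_of_mem_pathsBspin hε ha']
  have hcorner := cornerMon_eq_of_lower_last (m := j) (y := height a) (y' := height a')
    (by linarith) (by linarith) fun r hr => heq r (by omega) (by omega)
  have hend := endMon_intCast_sub j.succ_pos hε hε' (m - 1)
  have hend' := endMon_intCast_add j.succ_pos hε hε' (m + 1)
  push_cast at hend hend'
  rw [mon_spin j.succ_pos hε hε' hl ha, mon_spin j.succ_pos hε hε' hl ha', Amon_B_last hj,
    hcorner, hy, hy', hprev, hend, hend']
  abel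

theorem mon_spin_of_replaceB_penultimate (hε : 0 < ε) (hε' : ε < 1 / 2) (hl : l % 2 = 1)
    (ha : a ∈ pathsBspin (j + 2) ε l) (ha' : a' ∈ pathsBspin (j + 2) ε l)
    (h : ReplaceB (j + 2) ε (j + 1) m a a') :
    mon (.B (j + 2) ε) a' = mon (.B (j + 2) ε) a - Amon (.B (j + 2) ε) (j + 1) m := by
  rw [ReplaceB, if_neg (by omega), if_pos (by omega)] at h
  obtain ⟨r, hr, s, hs, hx₁, hx₂, hy₁, hy₁', hy₂, hy₂', heq⟩ := h.exists_height
  obtain rfl : r = j + 1 := eq_of_pt_fst_eq_iotaB ha (by omega) hr hx₁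
  obtain rfl : s = j + 2 := eq_of_pt_fst_eq_last ha hs hx₂
  rw [ha.1] at heq
  have hprev' : height a' j = height a j := heq j (by omega) (by omega) (by omega)
  have hprev : height a j = m :=
    height_eq_of_lower ha ha' (.inl rfl) (by omega) (by omega) hy₁ hy₁' hprev'
  have hcorner := cornerMon_eq_of_lower (m := j + 2) (i := j) (y := height a) (y' := height a')
    (by omega) (by linarith) (by linarith) (by linarith) (by linarith)
    (fun r hr hrj => heq r (by omega) hrj (by omega)) (fun h => absurd rfl h)
  have hend := endMon_intCast_add (j + 1).succ_pos hε hε' (m - 1)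
  have hend' := endMon_intCast_sub (j + 1).succ_pos hε hε' (m + 1)
  push_cast at hend hend'
  rw [mon_spin (by omega) hε hε' hl ha, mon_spin (by omega) hε hε' hl ha', Amon_B_penultimate,
    hcorner, hy₁, hy₁', hprev, columnY_eq_zero (j := j + 2) (by omega), hy₂, hy₂', hend, hend']
  abel

theorem mon_spin_of_replaceB_of_lt (hε : 0 < ε) (hε' : ε < 1 / 2) (hj : j + 2 < n)
    (hl : l % 2 = 1) (ha : a ∈ pathsBspin n ε l) (ha' : a' ∈ pathsBspin n ε l)
    (h : ReplaceB n ε (j + 1) m a a') :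
    mon (.B n ε) a' = mon (.B n ε) a - Amon (.B n ε) (j + 1) m := by
  rw [ReplaceB, if_neg (by omega), if_neg (by omega)] at h
  obtain ⟨r, hr, hx, hy, hy', heq⟩ := h.exists_height
  obtain rfl : r = j + 1 := eq_of_pt_fst_eq_iotaB ha (by omega) hr hx
  rw [ha.1] at heq
  have hprev' : height a' j = height a j := heq j (by omega) (by omega)
  have hnext' : height a' (j + 2) = height a (j + 2) := heq _ (by omega) (by omega)
  have hprev : height a j = m :=
    height_eq_of_lower ha ha' (.inl rfl) (by omega) (by omega) hy hy' hprev'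
  have hnext : height a (j + 2) = m :=
    height_eq_of_lower ha ha' (.inr rfl) (by omega) (by omega) hy hy' hnext'
  have hcorner := cornerMon_eq_of_lower (m := n) (i := j) (y := height a) (y' := height a')
    (by omega) (by linarith) (by linarith) (by linarith) (by linarith)
    (fun r hr hrj => heq r (by omega) hrj) (fun _ => heq n (by omega) (by omega))
  rw [mon_spin (by omega) hε hε' hl ha, mon_spin (by omega) hε hε' hl ha', Amon_B_of_lt hj,
    hcorner, hy, hy', hprev, hnext, heq n (by omega) (by omega)]
  abel

theorem mon_spin_of_replaceB (hn : 2 ≤ n) (hε : 0 < ε) (hε' : ε < 1 / 2) (hj0 : 0 < j)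
    (hjn : j ≤ n) (hl : l % 2 = 1) (ha : a ∈ pathsBspin n ε l) (ha' : a' ∈ pathsBspin n ε l)
    (h : ReplaceB n ε j m a a') :
    mon (.B n ε) a' = mon (.B n ε) a - Amon (.B n ε) j m := by
  obtain ⟨j, rfl⟩ := Nat.exists_eq_add_of_le' hj0
  rcases hjn.lt_or_eq with hjn | rfl
  · rcases (Nat.succ_le_of_lt hjn).lt_or_eq with hjn | rfl
    · exact mon_spin_of_replaceB_of_lt hε hε' hjn hl ha ha' h
    · exact mon_spin_of_replaceB_penultimate hε hε' hl ha ha' h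
  · exact mon_spin_of_replaceB_last hε hε' (by omega) hl ha ha' h

theorem mon_B_of_loweredTo (hn : 2 ≤ n) (hε : 0 < ε) (hε' : ε < 1 / 2) (hik : (i, k) ∈ XB n)
    (h : LoweredTo (.B n ε) i k j m p p') :
    mon (.B n ε) p' = mon (.B n ε) p - Amon (.B n ε) j m := by
  obtain ⟨hp, hp', ⟨⟨hX, -⟩, -⟩, hmove⟩ := h
  have hj : 0 < j ∧ j ≤ n := by
    rcases hX with ⟨hj, -⟩ | ⟨hj0, hjn, -⟩ <;> simp only at * <;> omega
  have hmove : ReplaceB n ε j m p p' := hmove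
  change p ∈ pathsB n ε i k at hp
  change p' ∈ pathsB n ε i k at hp'
  unfold pathsB at hp hp'
  rcases hik with ⟨hi, hk⟩ | ⟨hi0, hin, hk⟩ <;> simp only at *
  · rw [if_pos hi] at hp hp'
    exact mon_spin_of_replaceB hn hε hε' hj.1 hj.2 hk hp hp' hmove
  · rw [if_neg hin.ne] at hp hp'
    obtain ⟨a, b, ha, hb, rfl, -, hab⟩ := hp
    obtain ⟨a', b', ha', hb', rfl, -, hab'⟩ := hp'
    rw [mon_append_reverse (by omega) ha hb (by omega) (sub_pos.mp hab).ne',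
      mon_append_reverse (by omega) ha' hb' (by omega) (sub_pos.mp hab').ne']
    rcases ReplaceB.of_append_reverse hε hε' hj.1 hj.2 ha ha' hb hb' hmove with
      ⟨h, rfl⟩ | ⟨rfl, h⟩
    · rw [mon_spin_of_replaceB hn hε hε' hj.1 hj.2 (by omega) ha ha' h]
      abel
    · rw [mon_spin_of_replaceB hn hε hε' hj.1 hj.2 (by omega) hb hb' h]
      abel

end MovesB

section Tuples

variable {S : Setting} {p p' : List (ℝ × ℝ)} {i j : ℕ} {k l : ℤ}

theorem mon_of_loweredTo (hS : S.valid) (hik : (i, k) ∈ X S) (h : LoweredTo S i k j l p p') :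
    mon S p' = mon S p - Amon S j l := by
  cases S with
  | A n => exact mon_A_of_loweredTo h
  | B n ε => exact mon_B_of_loweredTo hS.1 hS.2.1 hS.2.2 hik h

theorem tmon_of_tLoweredTo (hS : S.valid) {T : ℕ} {w : Fin T → ℕ × ℤ} (hw : ∀ t, w t ∈ X S)
    {jl : ℕ × ℤ} {ps ps' : Fin T → List (ℝ × ℝ)} (h : TLoweredTo S w jl ps ps') :
    tmon S ps' = tmon S ps - Amon S jl.1 jl.2 := by
  obtain ⟨t, hlower, hother⟩ := h
  have hrest : ∑ s ∈ Finset.univ.erase t, mon S (ps' s) =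
      ∑ s ∈ Finset.univ.erase t, mon S (ps s) :=
    Finset.sum_congr rfl fun s hs => by rw [hother s (Finset.ne_of_mem_erase hs)]
  rw [tmon, tmon, ← Finset.add_sum_erase _ _ (Finset.mem_univ t),
    ← Finset.add_sum_erase _ _ (Finset.mem_univ t), hrest, mon_of_loweredTo hS (hw t) hlower]
  abel

end Tuples

theorem stmt8_general (S : Setting) (hS : S.valid) {T : ℕ} (w : Fin T → ℕ × ℤ)
    (hw : ∀ t, w t ∈ X S) (jl : ℕ × ℤ) (ps ps' : Fin T → List (ℝ × ℝ)) :
    (TLoweredTo S w jl ps ps' → tmon S ps' = tmon S ps - Amon S jl.1 jl.2) ∧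
    (TLoweredTo S w jl ps' ps → tmon S ps' = tmon S ps + Amon S jl.1 jl.2) :=
  ⟨tmon_of_tLoweredTo hS hw, fun h => eq_add_of_sub_eq (tmon_of_tLoweredTo hS hw h).symm⟩

/-- if the tuple `(p'_t)` is obtained from `(p_t) ∈ 𝒫̄` by a lowering
(resp. raising) move at `(j,ℓ) ∈ W`, then `∏ m(p'_t) = A_{j,ℓ}⁻¹ ∏ m(p_t)`
(resp. `∏ m(p'_t) = A_{j,ℓ} ∏ m(p_t)`) in the free abelian group `ℳ`
(written here additively in terms of exponents). -/
theorem stmt8 (S : Setting) (hS : S.valid) {T : ℕ} (hT : 1 ≤ T)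
    (w : Fin T → ℕ × ℤ) (hw : IsSnake S w)
    (ps : Fin T → List (ℝ × ℝ)) (hps : ps ∈ PBar S w)
    (jl : ℕ × ℤ) (hjl : jl ∈ W S) (ps' : Fin T → List (ℝ × ℝ)) :
    (TLoweredTo S w jl ps ps' → tmon S ps' = tmon S ps - Amon S jl.1 jl.2) ∧
    (TLoweredTo S w jl ps' ps → tmon S ps' = tmon S ps + Amon S jl.1 jl.2) :=
  stmt8_general S hS w hw.1 jl ps ps'

end Paper
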